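/- arXiv:1410.1669 — 4 statements merged into one kernel-verified Lean document; each statement's English description precedes it below -/
import Mathlib

section
/- For any finite simple graph G of order n with minimum degree δ, if r := ⌊s/(δ+1)⌋ + 1 satisfies r ≤ τ, then with θ = (δ+1)r − s, ρ = 1/θ and B_{s−1} = C((δ+1)r, s−1), the ⟨r,s⟩-domination number satisfies γ⟨r,s⟩(G) ≤ (1 − (rρ)^ρ / ((1+ρ)^{1+ρ} · B_{s−1}^{ρ})) · r·n. -/
open Finset Real

/-- The ⟨r,s⟩-domination number: the smallest weight of an s-dominating r-function. -/
noncomputable def rsDomNum {V : Type*} [Fintype V] [DecidableEq V]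
    (G : SimpleGraph V) [DecidableRel G.Adj] (rf sf : V → ℕ) : ℕ :=
  sInf {w : ℕ | ∃ f : V → ℕ, (∀ v, f v ≤ rf v) ∧
    (∀ v, sf v ≤ ∑ u ∈ insert v (G.neighborFinset v), f u) ∧ w = ∑ v, f v}

/-!
The proof is an alteration argument. Replace each vertex `v` by `r` slots `(v, i)` and delete each
slot independently with probability `q`; the number of slots kept at `v` lies in `{0, …, r}`. A
closed neighbourhood owns at least `(δ + 1) r = s + m` slots, where `m = θ`. Shrunk to exactly that
many, it falls short of `s` only when the number `y` of its deleted slots exceeds `m`. The shortfall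
`y - m` is repaired by restoring slots; it is at most `C(y, m + 1)`, whose expectation is
`C(s + m, m + 1) q ^ (m + 1)`. The expected weight is thus at most `n (r (1 - q) + B q ^ (m + 1))`,
which is minimal at `q ^ m = r ρ / ((1 + ρ) B)`.
-/

lemma cast_choose_card_inter {I R : Type*} [DecidableEq I] [AddCommMonoidWithOne R]
    (A S : Finset I) (k : ℕ) :
    ((#(A ∩ S)).choose k : R) = ∑ T ∈ A.powersetCard k, if T ⊆ S then 1 else 0 := by
  rw [← card_powersetCard, sum_boole]
  congr 2
  ext T
  simp only [mem_powersetCard, mem_filter, subset_inter_iff]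
  tauto

section RandomSubset

variable {I R : Type*} [Fintype I] [DecidableEq I] [CommRing R]

/-- The expectation of `X S`, where `S` is a random subset of `I` containing each element
independently with probability `q`. It is encoded as a finite weighted sum over all subsets, and
bundled as a linear functional of the random variable `X`. -/
noncomputable def randomSubsetExpectation (q : R) : (Finset I → R) →ₗ[R] R :=
  ∑ S, (q ^ #S * (1 - q) ^ #Sᶜ) • LinearMap.proj S

lemma randomSubsetExpectation_apply (q : R) (X : Finset I → R) :
    randomSubsetExpectation q X = ∑ S, q ^ #S * (1 - q) ^ #Sᶜ * X S := by
  simp [randomSubsetExpectation]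

lemma randomSubsetExpectation_ite_subset (q : R) (T : Finset I) :
    randomSubsetExpectation q (fun S ↦ if T ⊆ S then 1 else 0) = q ^ #T := by
  have factor_compl (S : Finset I) : (1 - q) ^ #Sᶜ * (if T ⊆ S then 1 else 0) =
      ∏ i ∈ Sᶜ, if i ∈ T then 0 else 1 - q := by
    split_ifs with hTS
    · rw [mul_one, ← prod_const]
      exact prod_congr rfl fun i hi ↦ (if_neg fun hiT ↦ mem_compl.1 hi (hTS hiT)).symm
    · obtain ⟨i, hiT, hiS⟩ := not_subset.1 hTS
      rw [mul_zero]
      exact Eq.symm <| prod_eq_zero (mem_compl.2 hiS) <| if_pos hiT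
  calc randomSubsetExpectation q (fun S ↦ if T ⊆ S then 1 else 0)
    _ = ∑ S, (∏ _i ∈ S, q) * ∏ i ∈ Sᶜ, if i ∈ T then 0 else 1 - q := by
      simp only [randomSubsetExpectation_apply, mul_assoc, factor_compl, prod_const]
    _ = ∏ i, (q + if i ∈ T then 0 else 1 - q) := (Fintype.prod_add _ _).symm
    _ = ∏ i, if i ∈ T then q else 1 := by
      refine prod_congr rfl fun i _ ↦ ?_
      split_ifs <;> ring
    _ = q ^ #T := by simp [prod_ite_mem]

lemma randomSubsetExpectation_const (q c : R) :
    randomSubsetExpectation q (fun _ : Finset I ↦ c) = c := by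
  have total_mass := randomSubsetExpectation_ite_subset q (∅ : Finset I)
  simp only [randomSubsetExpectation_apply, empty_subset, if_true, mul_one, card_empty,
    pow_zero] at total_mass
  rw [randomSubsetExpectation_apply, ← sum_mul, total_mass, one_mul]

lemma randomSubsetExpectation_choose_card_inter (q : R) (A : Finset I) (k : ℕ) :
    randomSubsetExpectation q (fun S ↦ ((#(A ∩ S)).choose k : R)) = (#A).choose k * q ^ k := by
  have choose_eq_sum : (fun S ↦ ((#(A ∩ S)).choose k : R)) =
      ∑ T ∈ A.powersetCard k, fun S ↦ if T ⊆ S then 1 else 0 := by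
    ext S
    rw [cast_choose_card_inter, Finset.sum_apply]
  rw [choose_eq_sum, map_sum, ← card_powersetCard, ← nsmul_eq_mul, ← sum_const]
  refine sum_congr rfl fun T hT ↦ ?_
  rw [randomSubsetExpectation_ite_subset, (mem_powersetCard.1 hT).2]

lemma randomSubsetExpectation_card_compl (q : R) :
    randomSubsetExpectation q (fun S : Finset I ↦ (#Sᶜ : R)) = Fintype.card I * (1 - q) := by
  have card_compl_eq : (fun S : Finset I ↦ (#Sᶜ : R)) =
      (fun _ ↦ (Fintype.card I : R)) - fun S ↦ ((#(univ ∩ S)).choose 1 : R) := by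
    ext S
    simp [card_compl, Nat.cast_sub (card_le_univ S)]
  rw [card_compl_eq, map_sub, randomSubsetExpectation_const,
    randomSubsetExpectation_choose_card_inter, card_univ, Nat.choose_one_right]
  ring

lemma exists_le_randomSubsetExpectation [LinearOrder R] [IsStrictOrderedRing R] {q : R}
    (hq₀ : 0 ≤ q) (hq₁ : q ≤ 1) (X : Finset I → R) : ∃ S, X S ≤ randomSubsetExpectation q X := by
  obtain ⟨S₀, hS₀⟩ := Finite.exists_min X
  refine ⟨S₀, ?_⟩
  rw [← randomSubsetExpectation_const (I := I) q (X S₀)]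
  simp only [randomSubsetExpectation_apply]
  exact sum_le_sum fun S _ ↦ mul_le_mul_of_nonneg_left (hS₀ S)
    (mul_nonneg (pow_nonneg hq₀ _) (pow_nonneg (sub_nonneg.2 hq₁) _))

end RandomSubset

section Multitransversal

variable {ι I : Type*} [Fintype ι] [DecidableEq I]

lemma exists_superset_forall_le_card_inter (s : ι → ℕ) (A : ι → Finset I)
    (hA : ∀ i, s i ≤ #(A i)) (Q : Finset I) :
    ∃ P, Q ⊆ P ∧ (∀ i, s i ≤ #(P ∩ A i)) ∧ #P ≤ #Q + ∑ i, (s i - #(Q ∩ A i)) := by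
  have exists_repair (i : ι) : ∃ E ⊆ A i \ Q, #E = s i - #(Q ∩ A i) :=
    exists_subset_card_eq (card_sdiff (s := Q) (t := A i) ▸ Nat.sub_le_sub_right (hA i) _)
  choose E hE hEcard using exists_repair
  refine ⟨Q ∪ univ.biUnion E, subset_union_left, fun i ↦ ?_, ?_⟩
  · have disjoint_repair : Disjoint (Q ∩ A i) (E i) :=
      disjoint_sdiff.mono inter_subset_left (hE i)
    calc s i ≤ #(Q ∩ A i) + #(E i) := by rw [hEcard]; omega
      _ = #(Q ∩ A i ∪ E i) := (card_union_of_disjoint disjoint_repair).symm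
      _ ≤ #((Q ∪ univ.biUnion E) ∩ A i) := by
        refine card_le_card (union_subset (inter_subset_inter_right subset_union_left) ?_)
        exact subset_inter ((subset_biUnion_of_mem E (mem_univ i)).trans subset_union_right)
          ((hE i).trans sdiff_subset)
  · calc #(Q ∪ univ.biUnion E) ≤ #Q + ∑ i, #(E i) :=
        (card_union_le _ _).trans (Nat.add_le_add_left card_biUnion_le _)
      _ = #Q + ∑ i, (s i - #(Q ∩ A i)) := by simp only [hEcard]

lemma sub_le_choose_add_one (y m : ℕ) : y - m ≤ y.choose (m + 1) := by
  induction y with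
  | zero => simp
  | succ y ih =>
    rw [Nat.choose_succ_succ']
    rcases Nat.lt_or_ge y m with hlt | hge
    · omega
    · have := Nat.choose_pos hge
      omega

lemma sub_card_compl_inter_le_choose [Fintype I] {s m : ℕ} {A : Finset I} (hA : #A = s + m)
    (S : Finset I) : s - #(Sᶜ ∩ A) ≤ (#(A ∩ S)).choose (m + 1) := by
  have card_split : #(Sᶜ ∩ A) + #(A ∩ S) = s + m := by
    rw [inter_comm, ← sdiff_eq_inter_compl, card_sdiff_add_card_inter, hA]
  exact le_trans (by omega) (sub_le_choose_add_one _ m)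

lemma exists_forall_le_card_inter_of_card_eq [Fintype I] {R : Type*} [CommRing R] [LinearOrder R]
    [IsStrictOrderedRing R] {s m : ℕ} (A : ι → Finset I) (hA : ∀ i, #(A i) = s + m) {q : R}
    (hq₀ : 0 ≤ q) (hq₁ : q ≤ 1) :
    ∃ P : Finset I, (∀ i, s ≤ #(P ∩ A i)) ∧ (#P : R) ≤
      Fintype.card I * (1 - q) + Fintype.card ι * ((s + m).choose (m + 1) * q ^ (m + 1)) := by
  obtain ⟨S, hS⟩ := exists_le_randomSubsetExpectation hq₀ hq₁
    ((fun S ↦ (#Sᶜ : R)) + ∑ i, fun S ↦ ((#(A i ∩ S)).choose (m + 1) : R))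
  obtain ⟨P, -, hP, hPcard⟩ :=
    exists_superset_forall_le_card_inter (fun _ ↦ s) A (fun i ↦ hA i ▸ Nat.le_add_right s m) Sᶜ
  refine ⟨P, hP, ?_⟩
  calc (#P : R) ≤ #Sᶜ + ∑ i, ((#(A i ∩ S)).choose (m + 1) : R) := by
        have := sum_le_sum fun i (_ : i ∈ univ) ↦ sub_card_compl_inter_le_choose (hA i) S
        exact_mod_cast hPcard.trans (Nat.add_le_add_left this _)
    _ ≤ randomSubsetExpectation q
          ((fun S ↦ (#Sᶜ : R)) + ∑ i, fun S ↦ ((#(A i ∩ S)).choose (m + 1) : R)) := by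
        simpa only [Pi.add_apply, Finset.sum_apply] using hS
    _ = _ := by
      simp only [map_add, map_sum, randomSubsetExpectation_card_compl,
        randomSubsetExpectation_choose_card_inter, hA, sum_const, card_univ, nsmul_eq_mul]

lemma exists_forall_le_card_inter [Fintype I] {R : Type*} [CommRing R] [LinearOrder R]
    [IsStrictOrderedRing R] {s m : ℕ} (A : ι → Finset I) (hA : ∀ i, s + m ≤ #(A i)) {q : R}
    (hq₀ : 0 ≤ q) (hq₁ : q ≤ 1) :
    ∃ P : Finset I, (∀ i, s ≤ #(P ∩ A i)) ∧ (#P : R) ≤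
      Fintype.card I * (1 - q) + Fintype.card ι * ((s + m).choose (m + 1) * q ^ (m + 1)) := by
  choose A' hA'sub hA'card using fun i ↦ exists_subset_card_eq (hA i)
  obtain ⟨P, hP, hPcard⟩ := exists_forall_le_card_inter_of_card_eq A' hA'card hq₀ hq₁
  exact ⟨P, fun i ↦ (hP i).trans (card_le_card (inter_subset_inter_left (hA'sub i))), hPcard⟩

end Multitransversal

section Graph

variable {V : Type*} [Fintype V] [DecidableEq V] (G : SimpleGraph V) [DecidableRel G.Adj]

lemma rsDomNum_le_sum {rf sf f : V → ℕ} (hrf : ∀ v, f v ≤ rf v)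
    (hsf : ∀ v, sf v ≤ ∑ u ∈ insert v (G.neighborFinset v), f u) :
    rsDomNum G rf sf ≤ ∑ v, f v :=
  Nat.sInf_le ⟨f, hrf, hsf, rfl⟩

lemma rsDomNum_le_card_slots {rf sf : V → ℕ} {r : ℕ} (hr : ∀ v, r ≤ rf v) (P : Finset (V × Fin r))
    (hP : ∀ v, sf v ≤ #(P ∩ insert v (G.neighborFinset v) ×ˢ univ)) :
    rsDomNum G rf sf ≤ #P := by
  have sum_card_slots (X : Finset V) : ∑ u ∈ X, #{x ∈ P | x.1 = u} = #(P ∩ X ×ˢ univ) := by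
    rw [sum_card_fiberwise_eq_card_filter]
    congr 1
    ext x
    simp
  calc rsDomNum G rf sf ≤ ∑ u, #{x ∈ P | x.1 = u} := by
        refine rsDomNum_le_sum G (fun v ↦ ?_) (fun v ↦ (hP v).trans_eq (sum_card_slots _).symm)
        calc #{x ∈ P | x.1 = v} = #(P ∩ {v} ×ˢ univ) := by rw [← sum_card_slots, sum_singleton]
          _ ≤ #(({v} : Finset V) ×ˢ (univ : Finset (Fin r))) := card_le_card inter_subset_right
          _ = r := by simp
          _ ≤ rf v := hr v
    _ = #P := by rw [sum_card_slots, univ_product_univ, inter_univ]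

lemma rsDomNum_le_alteration_bound {rf sf : V → ℕ} {δ r s m : ℕ} (hδ : ∀ v, δ ≤ G.degree v)
    (hs : ∀ v, sf v ≤ s) (hr : ∀ v, r ≤ rf v) (hm : (δ + 1) * r = s + m) {q : ℝ} (hq₀ : 0 ≤ q)
    (hq₁ : q ≤ 1) :
    (rsDomNum G rf sf : ℝ) ≤
      Fintype.card V * (r * (1 - q) + (s + m).choose (m + 1) * q ^ (m + 1)) := by
  have le_card_slots (v : V) :
      s + m ≤ #(insert v (G.neighborFinset v) ×ˢ (univ : Finset (Fin r))) := by
    rw [card_product, card_insert_of_notMem (by simp), G.card_neighborFinset_eq_degree, card_fin,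
      ← hm]
    exact Nat.mul_le_mul_right r (Nat.succ_le_succ (hδ v))
  obtain ⟨P, hP, hPcard⟩ := exists_forall_le_card_inter _ le_card_slots hq₀ hq₁
  calc (rsDomNum G rf sf : ℝ) ≤ #P := by
        exact_mod_cast rsDomNum_le_card_slots G hr P fun v ↦ (hs v).trans (hP v)
    _ ≤ _ := hPcard
    _ = _ := by
      rw [Fintype.card_prod, Fintype.card_fin]
      push_cast
      ring

end Graph

lemma exists_mul_one_sub_add_mul_rpow_eq {a b ρ : ℝ} (ha : 0 ≤ a) (hb : 0 < b) (hρ : 0 < ρ)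
    (hab : a * ρ ≤ (1 + ρ) * b) :
    ∃ q ∈ Set.Icc (0 : ℝ) 1, a * (1 - q) + b * q ^ (1 + 1 / ρ) =
      (1 - (a * ρ) ^ ρ / ((1 + ρ) ^ (1 + ρ) * b ^ ρ)) * a := by
  set x := a * ρ / ((1 + ρ) * b) with hx
  have hx₀ : 0 ≤ x := by positivity
  have hx₁ : x ≤ 1 := div_le_one_of_le₀ hab (by positivity)
  have rpow_split : (x ^ ρ) ^ (1 + 1 / ρ) = x ^ ρ * x := by
    rw [rpow_add_of_nonneg (by positivity) zero_le_one (by positivity), rpow_one, ← rpow_mul hx₀,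
      mul_one_div_cancel hρ.ne', rpow_one]
  have ratio_eq : (a * ρ) ^ ρ / ((1 + ρ) ^ (1 + ρ) * b ^ ρ) = x ^ ρ / (1 + ρ) := by
    rw [hx, div_rpow (by positivity) (by positivity), mul_rpow (by positivity) hb.le,
      rpow_add (by positivity), rpow_one]
    field_simp
  refine ⟨x ^ ρ, ⟨rpow_nonneg hx₀ ρ, rpow_le_one hx₀ hx₁ hρ.le⟩, ?_⟩
  rw [rpow_split, ratio_eq, hx]
  field_simp
  ring

-- For `s = 0` the truncated `s - 1` turns `C(s + m, s - 1)` into `1`, not `0`.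
lemma choose_add_one_le_choose_sub_one (s m : ℕ) :
    (s + m).choose (m + 1) ≤ (s + m).choose (s - 1) := by
  rcases s with _ | k
  · simp
  · exact (Nat.choose_symm_of_eq_add (by omega)).le

lemma add_le_choose_sub_one_mul (s m : ℕ) : s + m ≤ (s + m).choose (s - 1) * (m + 1) := by
  rcases s with _ | k
  · simp
  · calc k + 1 + m ≤ (k + m).choose k * (k + m + 1) := by
          nlinarith [Nat.choose_pos (Nat.le_add_right k m)]
      _ = (k + m + 1).choose k * (k + m + 1 - k) := Nat.choose_mul_succ_eq _ _
      _ = (k + 1 + m).choose k * (m + 1) := by grind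

theorem rs_domination_bound_general {V : Type*} [Fintype V] [DecidableEq V] (G : SimpleGraph V)
    [DecidableRel G.Adj] {rf sf : V → ℕ} {δ r s : ℕ} (hδ : ∀ v, δ ≤ G.degree v)
    (hs : ∀ v, sf v ≤ s) (hr : ∀ v, r ≤ rf v) (hsr : s < (δ + 1) * r) {θ ρ B : ℝ}
    (hθ : θ = ((δ : ℝ) + 1) * r - s) (hρ : ρ = 1 / θ)
    (hB : B = (((δ + 1) * r).choose (s - 1) : ℕ)) :
    (rsDomNum G rf sf : ℝ) ≤
      (1 - ((r : ℝ) * ρ) ^ ρ / ((1 + ρ) ^ (1 + ρ) * B ^ ρ)) * (r * Fintype.card V) := by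
  obtain ⟨m, hm⟩ := Nat.exists_eq_add_of_le hsr.le
  have hθm : θ = m := by
    rw [hθ, sub_eq_iff_eq_add']
    exact_mod_cast hm
  have hm₀ : (0 : ℝ) < m := by exact_mod_cast (by omega : 0 < m)
  have choose_le_B : ((s + m).choose (m + 1) : ℝ) ≤ B := by
    rw [hB, hm]
    exact_mod_cast choose_add_one_le_choose_sub_one s m
  have hB₀ : 0 < B := by
    rw [hB]
    exact_mod_cast Nat.choose_pos (by omega)
  have r_le : (r : ℝ) ≤ B * (m + 1) := by
    rw [hB, hm]
    exact_mod_cast (Nat.le_mul_of_pos_left r δ.succ_pos).trans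
      (hm.trans_le (add_le_choose_sub_one_mul s m))
  have rρ_le : r * ρ ≤ (1 + ρ) * B := by
    rw [hρ, hθm]
    field_simp
    linarith
  obtain ⟨q, ⟨hq₀, hq₁⟩, hq⟩ := exists_mul_one_sub_add_mul_rpow_eq r.cast_nonneg hB₀
    (by rw [hρ, hθm]; positivity) rρ_le
  have hqm : q ^ (1 + 1 / ρ) = q ^ (m + 1) := by
    rw [hρ, one_div_one_div, hθm, add_comm, ← rpow_natCast, Nat.cast_add_one]
  calc (rsDomNum G rf sf : ℝ)
    _ ≤ Fintype.card V * (r * (1 - q) + (s + m).choose (m + 1) * q ^ (m + 1)) :=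
      rsDomNum_le_alteration_bound G hδ hs hr hm hq₀ hq₁
    _ ≤ Fintype.card V * (r * (1 - q) + B * q ^ (m + 1)) := by gcongr
    _ = _ := by rw [← hqm, hq]; ring

theorem rs_domination_bound
    {V : Type*} [Fintype V] [DecidableEq V] [Nonempty V]
    (G : SimpleGraph V) [DecidableRel G.Adj]
    (n : ℕ) (hn : n = Fintype.card V)
    (δ : ℕ) (hδ : δ = G.minDegree)
    (rf sf : V → ℕ)
    (s : ℕ) (hs : s = Finset.univ.sup sf)
    (r : ℕ) (hr : r = s / (δ + 1) + 1)
    (hrτ : r ≤ Finset.univ.inf' Finset.univ_nonempty rf)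
    (θ : ℝ) (hθ : θ = ((δ : ℝ) + 1) * r - s)
    (ρ : ℝ) (hρ : ρ = 1 / θ)
    (B : ℝ) (hB : B = (((δ + 1) * r).choose (s - 1) : ℕ)) :
    (rsDomNum G rf sf : ℝ) ≤
      (1 - ((r : ℝ) * ρ) ^ ρ / ((1 + ρ) ^ (1 + ρ) * B ^ ρ)) * ((r : ℝ) * n) :=
  hn ▸ rs_domination_bound_general G (fun v ↦ hδ ▸ G.minDegree_le_degree v)
    (fun v ↦ hs ▸ le_sup (mem_univ v)) (fun v ↦ (le_inf'_iff _ rf).1 hrτ v (mem_univ v))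
    (hr ▸ Nat.lt_mul_div_succ s δ.succ_pos) hθ hρ hB
end

section
/- For any finite simple graph G of order n with minimum degree δ, if r := ⌊s/(δ+1)⌋ + 1 satisfies r ≤ τ, then with θ = (δ+1)r − s and B_{s−1} = C((δ+1)r, s−1), the ⟨r,s⟩-domination number satisfies γ⟨r,s⟩(G) ≤ ((ln(θ+1) + ln B_{s−1} − ln r + 1)/(θ+1)) · r·n. -/
open Finset Real

/-!
Split every vertex into `r` copies and choose in each blown-up closed neighbourhood a cell of
exactly `N = (δ + 1) * r` copies. A set `T` of copies meets a cell in at least `s` points iff it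
hits all of the cell's subsets of size `k = N + 1 - s = θ + 1`, so it suffices to find a small
transversal of a `k`-uniform hypergraph with at most `n * N.choose k` edges on `n * r` points. Such
a transversal is obtained by taking each point with probability `p`, adding one point of every edge
that was missed, and optimizing over `p`.
-/

section RandomSubset

variable {α ι : Type*} [Fintype α]

theorem sum_mul_card_filter {R : Type*} [CommSemiring R] (w : α → R) (s : Finset ι)
    (P : ι → α → Prop) [∀ i a, Decidable (P i a)] :
    ∑ a, w a * (#{i ∈ s | P i a} : R) = ∑ i ∈ s, ∑ a with P i a, w a := by
  simp only [card_filter, Nat.cast_sum, Nat.cast_ite, Nat.cast_one, Nat.cast_zero, mul_sum,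
    mul_ite, mul_one, mul_zero, sum_filter]
  exact sum_comm

theorem exists_le_sum_mul_of_sum_eq_one {w : α → ℝ} (hw₀ : ∀ a, 0 ≤ w a) (hw₁ : ∑ a, w a = 1)
    (X : α → ℝ) : ∃ a, X a ≤ ∑ b, w b * X b := by
  obtain ⟨a, -, ha⟩ := (concaveOn_id convex_univ).exists_le_of_centerMass (t := univ) (p := X)
    (fun a _ ↦ hw₀ a) (hw₁ ▸ one_pos) (fun _ _ ↦ Set.mem_univ _)
  exact ⟨a, by simpa [centerMass_eq_of_sum_1 _ _ hw₁] using ha⟩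

variable [DecidableEq α]

/-- The probability that the random subset of `α` containing each point independently with
probability `p` is equal to `A`. -/
def bernoulliWeight (p : ℝ) (A : Finset α) : ℝ :=
  p ^ #A * (1 - p) ^ #Aᶜ

theorem bernoulliWeight_nonneg {p : ℝ} (hp₀ : 0 ≤ p) (hp₁ : p ≤ 1) (A : Finset α) :
    0 ≤ bernoulliWeight p A :=
  mul_nonneg (pow_nonneg hp₀ _) (pow_nonneg (sub_nonneg.2 hp₁) _)

theorem sum_bernoulliWeight_filter_disjoint (p : ℝ) (D : Finset α) :
    ∑ A with Disjoint D A, bernoulliWeight p A = (1 - p) ^ #D := by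
  calc ∑ A with Disjoint D A, bernoulliWeight p A
      = ∑ A : Finset α, (∏ x ∈ A, if x ∉ D then p else 0) * ∏ _ ∈ Aᶜ, (1 - p) := by
        simp only [sum_filter, prod_ite_zero, prod_const, bernoulliWeight, disjoint_right,
          ite_mul, zero_mul]
    _ = ∏ x : α, ((if x ∉ D then p else 0) + (1 - p)) := (Fintype.prod_add _ _).symm
    _ = ∏ x : α, if x ∈ D then 1 - p else 1 := by
        refine prod_congr rfl fun x _ ↦ ?_
        by_cases hx : x ∈ D <;> simp [hx]
    _ = (1 - p) ^ #D := by simp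

theorem sum_bernoulliWeight (p : ℝ) : ∑ A : Finset α, bernoulliWeight p A = 1 := by
  simpa using sum_bernoulliWeight_filter_disjoint p (∅ : Finset α)

theorem sum_bernoulliWeight_filter_mem (p : ℝ) (x : α) :
    ∑ A with x ∈ A, bernoulliWeight p A = p := by
  have h_notMem : ∑ A with x ∉ A, bernoulliWeight p A = 1 - p := by
    simpa using sum_bernoulliWeight_filter_disjoint p {x}
  have h_split := sum_filter_add_sum_filter_not univ (x ∈ ·) (bernoulliWeight p)
  rw [h_notMem, sum_bernoulliWeight] at h_split
  linarith

theorem sum_bernoulliWeight_mul_card (p : ℝ) :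
    ∑ A : Finset α, bernoulliWeight p A * #A = p * Fintype.card α := by
  calc ∑ A : Finset α, bernoulliWeight p A * #A
      = ∑ A : Finset α, bernoulliWeight p A * #{x | x ∈ A} := by simp only [filter_univ_mem]
    _ = ∑ _ : α, p := by simp only [sum_mul_card_filter, sum_bernoulliWeight_filter_mem]
    _ = p * Fintype.card α := by simp [mul_comm]

theorem exists_card_add_card_filter_disjoint_le {p : ℝ} (hp₀ : 0 ≤ p) (hp₁ : p ≤ 1)
    (F : Finset (Finset α)) :
    ∃ A : Finset α, (#A + #{D ∈ F | Disjoint D A} : ℝ) ≤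
      p * Fintype.card α + ∑ D ∈ F, (1 - p) ^ #D := by
  obtain ⟨A, hA⟩ := exists_le_sum_mul_of_sum_eq_one (bernoulliWeight_nonneg hp₀ hp₁)
    (sum_bernoulliWeight p) fun A : Finset α ↦ (#A + #{D ∈ F | Disjoint D A} : ℝ)
  refine ⟨A, hA.trans_eq ?_⟩
  simp only [mul_add, sum_add_distrib, sum_bernoulliWeight_mul_card, sum_mul_card_filter,
    sum_bernoulliWeight_filter_disjoint]

end RandomSubset

section Binomial

variable {N s : ℕ}

-- Not an equality: for `s = 0` truncated subtraction gives `N.choose (N + 1) ≤ N.choose 0`.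
theorem choose_add_one_sub_le_choose_sub_one (hs : s ≤ N) :
    N.choose (N + 1 - s) ≤ N.choose (s - 1) := by
  rcases s with _ | t
  · simp
  · exact (Nat.choose_symm_of_eq_add (by omega)).le

theorem le_add_one_sub_mul_choose_sub_one (hs : s ≤ N) :
    N ≤ (N + 1 - s) * N.choose (s - 1) := by
  rcases s with _ | t
  · simp
  obtain ⟨M, rfl⟩ : ∃ M, N = M + 1 := ⟨N - 1, by omega⟩
  calc M + 1 ≤ M.choose t * (M + 1) :=
        Nat.le_mul_of_pos_left _ (Nat.choose_pos (by omega))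
    _ = (M + 1 + 1 - (t + 1)) * (M + 1).choose (t + 1 - 1) := by
        rw [Nat.choose_mul_succ_eq, Nat.add_sub_add_right, Nat.add_sub_cancel, mul_comm]

end Binomial

section Transversal

variable {α : Type*} {F : Finset (Finset α)} {k : ℕ}

/-- `T` is a transversal (hitting set) of the hypergraph with edge set `F`. -/
def IsTransversal (F : Finset (Finset α)) (T : Finset α) : Prop :=
  ∀ D ∈ F, ¬Disjoint D T

theorem IsTransversal.card_sdiff_lt [DecidableEq α] {C T : Finset α}
    (hT : IsTransversal (powersetCard k C) T) : #(C \ T) < k := by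
  by_contra! hk
  obtain ⟨D, hD, hDk⟩ := exists_subset_card_eq hk
  rw [subset_sdiff] at hD
  exact hT D (mem_powersetCard.2 ⟨hD.1, hDk⟩) hD.2

theorem isTransversal_univ [Fintype α] (hF : ∀ D ∈ F, D.Nonempty) : IsTransversal F univ := by
  intro D hD h_disj
  obtain ⟨x, hx⟩ := hF D hD
  exact disjoint_left.1 h_disj hx (mem_univ x)

theorem exists_isTransversal_card_le_add [DecidableEq α] (hF : ∀ D ∈ F, D.Nonempty)
    (A : Finset α) : ∃ T, IsTransversal F T ∧ #T ≤ #A + #{D ∈ F | Disjoint D A} := by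
  let missed : Finset (Finset α) := {D ∈ F | Disjoint D A}
  have h_nonempty (D : missed) : D.1.Nonempty := hF D.1 (mem_filter.1 D.2).1
  choose point h_point using h_nonempty
  refine ⟨A ∪ univ.image point, fun D hD h_disj ↦ ?_, ?_⟩
  · rw [disjoint_union_right] at h_disj
    let E : missed := ⟨D, mem_filter.2 ⟨hD, h_disj.1⟩⟩
    exact disjoint_left.1 h_disj.2 (h_point E) (mem_image_of_mem point (mem_univ E))
  · calc #(A ∪ univ.image point) ≤ #A + #(univ.image point) := card_union_le _ _
      _ ≤ #A + #(univ : Finset missed) := by gcongr; exact card_image_le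
      _ = #A + #missed := by rw [card_univ, Fintype.card_coe]

variable [Fintype α]

theorem exists_isTransversal_card_le (hF : ∀ D ∈ F, D.Nonempty) {p : ℝ} (hp₀ : 0 ≤ p)
    (hp₁ : p ≤ 1) :
    ∃ T, IsTransversal F T ∧ (#T : ℝ) ≤ p * Fintype.card α + ∑ D ∈ F, (1 - p) ^ #D := by
  classical
  obtain ⟨A, hA⟩ := exists_card_add_card_filter_disjoint_le hp₀ hp₁ F
  obtain ⟨T, hT, hTA⟩ := exists_isTransversal_card_le_add hF A
  exact ⟨T, hT, le_trans (mod_cast hTA) hA⟩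

theorem exists_isTransversal_card_le_exp (hk : 0 < k) (hF : (F : Set (Finset α)).Sized k) {p : ℝ}
    (hp₀ : 0 ≤ p) :
    ∃ T, IsTransversal F T ∧ (#T : ℝ) ≤ p * Fintype.card α + #F * exp (-(p * k)) := by
  have hF₀ : ∀ D ∈ F, D.Nonempty := fun D hD ↦ card_pos.1 (hF hD ▸ hk)
  rcases le_total p 1 with hp₁ | hp₁
  · obtain ⟨T, hT, hT_le⟩ := exists_isTransversal_card_le hF₀ hp₀ hp₁
    refine ⟨T, hT, hT_le.trans ?_⟩
    calc p * Fintype.card α + ∑ D ∈ F, (1 - p) ^ #D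
        = p * Fintype.card α + #F * (1 - p) ^ k := by
          rw [sum_congr rfl fun D hD ↦ by rw [hF hD], sum_const, nsmul_eq_mul]
      _ ≤ p * Fintype.card α + #F * exp (-p) ^ k := by
          have := sub_nonneg.2 hp₁
          gcongr
          exact one_sub_le_exp_neg p
      _ = p * Fintype.card α + #F * exp (-(p * k)) := by
          rw [← exp_nat_mul, mul_neg, mul_comm (k : ℝ)]
  · refine ⟨univ, isTransversal_univ hF₀, ?_⟩
    calc (#(univ : Finset α) : ℝ) = 1 * Fintype.card α := by simp
      _ ≤ p * Fintype.card α := by gcongr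
      _ ≤ p * Fintype.card α + #F * exp (-(p * k)) := le_add_of_nonneg_right (by positivity)

theorem exists_isTransversal_card_le_log [Nonempty α] (hk : 0 < k)
    (hF : (F : Set (Finset α)).Sized k) {M : ℝ} (hFM : #F ≤ M) (hM : Fintype.card α ≤ k * M) :
    ∃ T, IsTransversal F T ∧
      (#T : ℝ) ≤ (log (k * M / Fintype.card α) + 1) / k * Fintype.card α := by
  set m : ℝ := (Fintype.card α : ℝ)
  have hm : 0 < m := Nat.cast_pos.2 Fintype.card_pos
  have hk' : (0 : ℝ) < k := Nat.cast_pos.2 hk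
  have hM₀ : 0 < M := pos_of_mul_pos_right (hm.trans_le hM) hk'.le
  -- This `p` minimizes `p * m + M * exp (-(p * k))`.
  set p : ℝ := log (k * M / m) / k with hp
  have hp₀ : 0 ≤ p := div_nonneg (log_nonneg ((one_le_div hm).2 hM)) hk'.le
  have h_exp : exp (-(p * k)) = m / (k * M) := by
    rw [hp, div_mul_cancel₀ _ hk'.ne', exp_neg, exp_log (by positivity), inv_div]
  obtain ⟨T, hT, hT_le⟩ := exists_isTransversal_card_le_exp hk hF hp₀
  refine ⟨T, hT, hT_le.trans ?_⟩
  calc p * m + #F * exp (-(p * k)) ≤ p * m + M * exp (-(p * k)) := by gcongr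
    _ = p * m + m / k := by rw [h_exp]; field_simp
    _ = (log (k * M / m) + 1) / k * m := by rw [hp]; ring

theorem exists_forall_le_card_inter_card_le_log [Nonempty α] [DecidableEq α] {ι : Type*}
    [Fintype ι] (C : ι → Finset α) {N s : ℕ} (hC : ∀ i, #(C i) = N) (hs : s ≤ N)
    (hα : Fintype.card α ≤ Fintype.card ι * N) :
    ∃ T : Finset α, (∀ i, s ≤ #(C i ∩ T)) ∧
      (#T : ℝ) ≤
        (log ((N + 1 - s : ℕ) * (Fintype.card ι * N.choose (s - 1)) / Fintype.card α) + 1) /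
          (N + 1 - s : ℕ) * Fintype.card α := by
  set k := N + 1 - s
  let F : Finset (Finset α) := univ.biUnion fun i ↦ powersetCard k (C i)
  have hF_sized : (F : Set (Finset α)).Sized k := by
    intro D hD
    obtain ⟨i, -, hDi⟩ := mem_biUnion.1 hD
    exact (mem_powersetCard.1 hDi).2
  have hF_card : #F ≤ Fintype.card ι * N.choose (s - 1) :=
    calc #F ≤ Fintype.card ι * N.choose k :=
          card_biUnion_le_card_mul _ _ _ fun i _ ↦ by rw [card_powersetCard, hC]
      _ ≤ Fintype.card ι * N.choose (s - 1) := by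
          gcongr 1
          exact choose_add_one_sub_le_choose_sub_one hs
  have hα_le : Fintype.card α ≤ k * (Fintype.card ι * N.choose (s - 1)) :=
    calc Fintype.card α ≤ Fintype.card ι * N := hα
      _ ≤ Fintype.card ι * (k * N.choose (s - 1)) := by
          gcongr
          exact le_add_one_sub_mul_choose_sub_one hs
      _ = k * (Fintype.card ι * N.choose (s - 1)) := mul_left_comm _ _ _
  obtain ⟨T, hT, hT_le⟩ := exists_isTransversal_card_le_log (by omega) hF_sized
    (M := Fintype.card ι * N.choose (s - 1)) (mod_cast hF_card) (mod_cast hα_le)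
  refine ⟨T, fun i ↦ ?_, hT_le⟩
  have hTi : IsTransversal (powersetCard k (C i)) T := fun D hD ↦
    hT D (mem_biUnion.2 ⟨i, mem_univ i, hD⟩)
  have h_missed : #(C i \ T) < k := hTi.card_sdiff_lt
  have h_split := card_inter_add_card_sdiff (C i) T
  rw [hC i] at h_split
  omega

end Transversal

section Domination

variable {V : Type*} [Fintype V] [DecidableEq V] (G : SimpleGraph V) [DecidableRel G.Adj]
  {rf sf : V → ℕ} {δ r s : ℕ}

theorem rsDomNum_le_card (hrf : ∀ v, r ≤ rf v) (T : Finset (V × Fin r))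
    (hT : ∀ v, sf v ≤ #{x ∈ T | x.1 ∈ insert v (G.neighborFinset v)}) :
    rsDomNum G rf sf ≤ #T := by
  let f : V → ℕ := fun v ↦ #{x ∈ T | x.1 = v}
  have hf_sum (S : Finset V) : ∑ u ∈ S, f u = #{x ∈ T | x.1 ∈ S} :=
    sum_card_fiberwise_eq_card_filter T S Prod.fst
  have hf_le (v : V) : f v ≤ r := by
    have h_sub : {x ∈ T | x.1 = v} ⊆ ({v} : Finset V) ×ˢ (univ : Finset (Fin r)) := fun x hx ↦
      mem_product.2 ⟨mem_singleton.2 (mem_filter.1 hx).2, mem_univ _⟩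
    simpa using card_le_card h_sub
  refine Nat.sInf_le ⟨f, fun v ↦ (hf_le v).trans (hrf v), fun v ↦ ?_, ?_⟩
  · exact (hf_sum _).symm ▸ hT v
  · simp [hf_sum]

theorem exists_subset_insert_neighborFinset_product_card_eq (hδ : δ ≤ G.minDegree) (r : ℕ)
    (v : V) : ∃ C ⊆ insert v (G.neighborFinset v) ×ˢ (univ : Finset (Fin r)),
      #C = (δ + 1) * r := by
  apply exists_subset_card_eq
  rw [card_product, card_univ, Fintype.card_fin, card_insert_of_notMem (by simp),
    G.card_neighborFinset_eq_degree]
  gcongr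
  exact hδ.trans (G.minDegree_le_degree v)

theorem rs_domination_log_bound_general [Nonempty V] (n : ℕ) (hn : n = Fintype.card V)
    (hδ : δ ≤ G.minDegree) (hsf : ∀ v, sf v ≤ s) (hr : 0 < r) (hrf : ∀ v, r ≤ rf v)
    (hs : s ≤ (δ + 1) * r) (θ : ℝ) (hθ : θ = ((δ : ℝ) + 1) * r - s)
    (B : ℝ) (hB : B = (((δ + 1) * r).choose (s - 1) : ℕ)) :
    (rsDomNum G rf sf : ℝ) ≤
      ((log (θ + 1) + log B - log r + 1) / (θ + 1)) * ((r : ℝ) * n) := by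
  have hθ_add_one : θ + 1 = ((δ + 1) * r + 1 - s : ℕ) := by
    rw [hθ, Nat.cast_sub (by omega)]
    push_cast
    ring
  have hθ_pos : 0 < θ + 1 := hθ_add_one ▸ Nat.cast_pos.2 (by omega)
  have hB_pos : 0 < B := hB ▸ Nat.cast_pos.2 (Nat.choose_pos (by omega))
  have hr_pos : (0 : ℝ) < r := Nat.cast_pos.2 hr
  have hn_pos : (0 : ℝ) < n := hn ▸ Nat.cast_pos.2 Fintype.card_pos
  have : NeZero r := ⟨hr.ne'⟩
  have h_card : Fintype.card (V × Fin r) = n * r := by simp [hn]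
  choose C hC_sub hC_card using exists_subset_insert_neighborFinset_product_card_eq G hδ r
  obtain ⟨T, hT, hT_le⟩ := exists_forall_le_card_inter_card_le_log C hC_card hs (by
    rw [h_card, ← hn]
    exact Nat.mul_le_mul_left n (Nat.le_mul_of_pos_left r δ.succ_pos))
  rw [← hθ_add_one, ← hB, ← hn, h_card, Nat.cast_mul] at hT_le
  have h_dom : rsDomNum G rf sf ≤ #T := rsDomNum_le_card G hrf T fun v ↦
    calc sf v ≤ #(C v ∩ T) := (hsf v).trans (hT v)
      _ ≤ #{x ∈ T | x.1 ∈ insert v (G.neighborFinset v)} := card_le_card fun x hx ↦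
          mem_filter.2 ⟨(mem_inter.1 hx).2, (mem_product.1 (hC_sub v (mem_inter.1 hx).1)).1⟩
  have h_log : log ((θ + 1) * (n * B) / (n * r)) = log (θ + 1) + log B - log r := by
    rw [mul_left_comm, mul_div_mul_left _ _ hn_pos.ne', log_div (by positivity) hr_pos.ne',
      log_mul hθ_pos.ne' hB_pos.ne']
  calc (rsDomNum G rf sf : ℝ) ≤ #T := mod_cast h_dom
    _ ≤ (log ((θ + 1) * (n * B) / (n * r)) + 1) / (θ + 1) * (n * r) := hT_le
    _ = (log (θ + 1) + log B - log r + 1) / (θ + 1) * (r * n) := by rw [h_log, mul_comm (n : ℝ)]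

end Domination

theorem rs_domination_log_bound
    {V : Type*} [Fintype V] [DecidableEq V] [Nonempty V]
    (G : SimpleGraph V) [DecidableRel G.Adj]
    (n : ℕ) (hn : n = Fintype.card V)
    (δ : ℕ) (hδ : δ = G.minDegree)
    (rf sf : V → ℕ)
    (s : ℕ) (hs : s = Finset.univ.sup sf)
    (r : ℕ) (hr : r = s / (δ + 1) + 1)
    (hrτ : r ≤ Finset.univ.inf' Finset.univ_nonempty rf)
    (θ : ℝ) (hθ : θ = ((δ : ℝ) + 1) * r - s)
    (B : ℝ) (hB : B = (((δ + 1) * r).choose (s - 1) : ℕ)) :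
    (rsDomNum G rf sf : ℝ) ≤
      ((Real.log (θ + 1) + Real.log B - Real.log r + 1) / (θ + 1)) * ((r : ℝ) * n) := by
  have hr_pos : 0 < r := hr ▸ Nat.succ_pos _
  have hs_le : s ≤ (δ + 1) * r := hr ▸ (Nat.lt_mul_div_succ s δ.succ_pos).le
  exact rs_domination_log_bound_general G n hn hδ.le (fun v ↦ hs ▸ le_sup (mem_univ v)) hr_pos
    (fun v ↦ hrτ.trans (inf'_le _ (mem_univ v))) hs_le θ hθ B hB
end

section
/- For any finite simple graph G of order n with minimum degree δ such that δ̂ := δ − max{k,l} + 1 > 0, the parametric domination number satisfies γ_{k,l}(G) ≤ (1 − δ̂ / ((1+δ̂)^{1+1/δ̂} · (b_{k−1} + b_{l−2})^{1/δ̂})) · n, where b_t = C(δ, t) and b_{−1} = 0. -/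
open Finset Real

/-- The parametric domination number γ_{k,l}: the minimum cardinality of a set D such that
every vertex outside D has at least k members of D in its closed neighbourhood, and every
vertex of D has at least l members of D in its closed neighbourhood. -/
noncomputable def paramDomNum {V : Type*} [Fintype V] [DecidableEq V]
    (G : SimpleGraph V) [DecidableRel G.Adj] (k l : ℕ) : ℕ :=
  sInf {m : ℕ | ∃ D : Finset V,
    (∀ v, v ∉ D → k ≤ ((insert v (G.neighborFinset v)) ∩ D).card) ∧
    (∀ v, v ∈ D → l ≤ ((insert v (G.neighborFinset v)) ∩ D).card) ∧
    m = D.card}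

/-! Let `A` contain each vertex independently with probability `p`, and fix `δ` neighbours of every
vertex. A vertex of `A` needs `l - 1` of its fixed neighbours in the dominating set; a vertex
outside `A` needs `max k (l - 1)` of them, so that it stays satisfied if it is itself added later.
Adding missing neighbours costs at most the sum of the shortfalls. The shortfall from `r` is at most
the number of `(δ + 1 - r)`-subsets of the fixed neighbours that avoid `A`, because
`m + 1 - a ≤ C(m, a)` for `a ≥ 1`, and each such subset avoids `A` with probability
`(1 - p) ^ (δ + 1 - r)`. The demand above `l - 1` arises only when the vertex itself is outside `A`,
which contributes one more factor `1 - p`. Hence, with `d = δ̂` and `b = b_{k-1} + b_{l-2}`, the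
expected size of the result is at most `(p + b (1 - p) ^ (d + 1)) n`, and this is minimal when
`(1 - p) ^ d = 1 / (b (d + 1))`. -/

section Choose

lemma succ_sub_le_choose (m : ℕ) {a : ℕ} (ha : 1 ≤ a) : m + 1 - a ≤ m.choose a := by
  rcases lt_or_ge m a with h | h
  · omega
  obtain ⟨j, rfl⟩ := Nat.exists_eq_add_of_le h
  calc a + j + 1 - a = (j + 1).choose j := by
        rw [Nat.choose_succ_self_right]
        omega
    _ ≤ (a + j).choose j := Nat.choose_le_choose j (by omega)
    _ = (a + j).choose a := Nat.choose_symm_add.symm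

lemma choose_succ_sub_eq_choose_pred {n r : ℕ} (hr : 1 ≤ r) (hrn : r ≤ n + 1) :
    n.choose (n + 1 - r) = n.choose (r - 1) :=
  Nat.choose_symm_of_eq_add (by omega)

lemma choose_add_two_sub_eq_ite {n r : ℕ} (hr : 1 ≤ r) (hrn : r ≤ n + 2) :
    n.choose (n + 2 - r) = if 2 ≤ r then n.choose (r - 2) else 0 := by
  split_ifs with h
  · exact Nat.choose_symm_of_eq_add (by omega)
  · exact Nat.choose_eq_zero_of_lt (by omega)

end Choose

section RandomSubset

variable {α : Type*} [Fintype α] [DecidableEq α] {p : ℝ}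

/-- The expectation of a function of a random subset of `α` that contains each element
independently with probability `p`, as a finite sum. It is bundled as a linear map so that
linearity of expectation is `map_add` and `map_sum`; `p` is an arbitrary real number, restricted to
`[0, 1]` where positivity matters. -/
noncomputable def randomSubsetMean (p : ℝ) : (Finset α → ℝ) →ₗ[ℝ] ℝ :=
  ∑ A : Finset α, (p ^ #A * (1 - p) ^ #Aᶜ) • LinearMap.proj A

lemma randomSubsetMean_apply (f : Finset α → ℝ) :
    randomSubsetMean p f = ∑ A : Finset α, p ^ #A * (1 - p) ^ #Aᶜ * f A := by
  simp [randomSubsetMean]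

lemma randomSubsetMean_indicator_subset_disjoint {S T : Finset α} (hST : Disjoint S T) :
    randomSubsetMean p (fun A ↦ if S ⊆ A ∧ Disjoint T A then 1 else 0) =
      p ^ #S * (1 - p) ^ #T := by
  have hfactor (i : α) : (if i ∉ T then p else 0) + (if i ∉ S then 1 - p else 0) =
      (if i ∈ S then p else 1) * (if i ∈ T then 1 - p else 1) := by
    have : i ∈ S → i ∉ T := fun hS hT ↦ disjoint_left.mp hST hS hT
    split_ifs <;> simp_all
  have hterm (A : Finset α) : p ^ #A * (1 - p) ^ #Aᶜ * (if S ⊆ A ∧ Disjoint T A then 1 else 0) =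
      (∏ i ∈ A, if i ∉ T then p else 0) * ∏ i ∈ Aᶜ, if i ∉ S then 1 - p else 0 := by
    have hS : S ⊆ A ↔ ∀ i ∈ Aᶜ, i ∉ S := by
      simp only [subset_iff, mem_compl]
      exact forall_congr' fun i ↦ not_imp_not.symm
    have hT : Disjoint T A ↔ ∀ i ∈ A, i ∉ T := disjoint_right
    simp only [prod_ite_zero, prod_const, hS, hT]
    split_ifs <;> simp_all
  calc randomSubsetMean p (fun A ↦ if S ⊆ A ∧ Disjoint T A then 1 else 0)
      = ∏ i, ((if i ∉ T then p else 0) + (if i ∉ S then 1 - p else 0)) := by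
        rw [randomSubsetMean_apply, Fintype.prod_add]
        exact sum_congr rfl fun A _ ↦ hterm A
    _ = p ^ #S * (1 - p) ^ #T := by
        simp only [hfactor, prod_mul_distrib, Fintype.prod_ite_mem, prod_const]

lemma randomSubsetMean_const (c : ℝ) : randomSubsetMean p (fun _ : Finset α ↦ c) = c := by
  have hone : ∑ A : Finset α, p ^ #A * (1 - p) ^ #Aᶜ = 1 := by
    simpa using (Fintype.prod_add (fun _ : α ↦ p) (fun _ ↦ 1 - p)).symm
  rw [randomSubsetMean_apply, ← sum_mul, hone, one_mul]

lemma randomSubsetMean_mono (hp₀ : 0 ≤ p) (hp₁ : p ≤ 1) {f g : Finset α → ℝ}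
    (hfg : ∀ A, f A ≤ g A) : randomSubsetMean p f ≤ randomSubsetMean p g := by
  have : 0 ≤ 1 - p := sub_nonneg.mpr hp₁
  simp only [randomSubsetMean_apply]
  gcongr with A
  exact hfg A

lemma randomSubsetMean_card :
    randomSubsetMean p (fun A : Finset α ↦ (#A : ℝ)) = p * Fintype.card α := by
  have hcard : (fun A : Finset α ↦ (#A : ℝ)) =
      ∑ v, fun A ↦ if {v} ⊆ A ∧ Disjoint ∅ A then 1 else 0 := by
    ext A
    simp
  simp only [hcard, map_sum, randomSubsetMean_indicator_subset_disjoint (disjoint_empty_right _),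
    card_singleton, card_empty, pow_one, pow_zero, mul_one, sum_const, nsmul_eq_mul, card_univ,
    mul_comm]

end RandomSubset

section Shortfall

variable {α : Type*} [DecidableEq α]

/-- The number of `a`-subsets of `N` that avoid `A`. With `a = #N + 1 - r` it dominates the
shortfall `r - #(N ∩ A)`, and unlike the shortfall it is a sum of indicators of simple events. -/
def avoidingCount (N : Finset α) (a : ℕ) (A : Finset α) : ℕ :=
  #{T ∈ N.powersetCard a | Disjoint T A}

lemma avoidingCount_eq_choose (N : Finset α) (a : ℕ) (A : Finset α) :
    avoidingCount N a A = (#(N \ A)).choose a := by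
  have : {T ∈ N.powersetCard a | Disjoint T A} = (N \ A).powersetCard a := by
    ext T
    simp only [mem_filter, mem_powersetCard, subset_sdiff]
    tauto
  rw [avoidingCount, this, card_powersetCard]

lemma sub_card_inter_le_avoidingCount {N : Finset α} {r : ℕ} (hr : r ≤ #N) (A : Finset α) :
    r - #(N ∩ A) ≤ avoidingCount N (#N + 1 - r) A := by
  rw [avoidingCount_eq_choose]
  have hsplit := card_sdiff_add_card_inter N A
  calc r - #(N ∩ A) = #(N \ A) + 1 - (#N + 1 - r) := by omega
    _ ≤ (#(N \ A)).choose (#N + 1 - r) := succ_sub_le_choose _ (by omega)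

lemma exists_superset_le_card_inter {ι : Type*} [Fintype ι] {N : ι → Finset α} {r : ι → ℕ}
    (hr : ∀ i, r i ≤ #(N i)) (A : Finset α) :
    ∃ D, A ⊆ D ∧ (∀ i, r i ≤ #(N i ∩ D)) ∧ #D ≤ #A + ∑ i, (r i - #(N i ∩ A)) := by
  have hS (i : ι) : ∃ S ⊆ N i \ A, #S = r i - #(N i ∩ A) := by
    have := card_sdiff_add_card_inter (N i) A
    have := hr i
    exact exists_subset_card_eq (by omega)
  choose S hSsub hScard using hS
  refine ⟨A ∪ univ.biUnion S, subset_union_left, fun i ↦ ?_, ?_⟩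
  · have hdisj : Disjoint (N i ∩ A) (S i) :=
      disjoint_of_subset_right (hSsub i) (disjoint_sdiff.mono_left inter_subset_right)
    have hsub : N i ∩ A ∪ S i ⊆ N i ∩ (A ∪ univ.biUnion S) := by
      rw [inter_union_distrib_left]
      exact union_subset_union_right
        (subset_inter ((hSsub i).trans sdiff_subset) (subset_biUnion_of_mem S (mem_univ i)))
    calc r i ≤ #(N i ∩ A) + #(S i) := by have := hScard i; omega
      _ = #(N i ∩ A ∪ S i) := (card_union_of_disjoint hdisj).symm
      _ ≤ #(N i ∩ (A ∪ univ.biUnion S)) := card_le_card hsub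
  · calc #(A ∪ univ.biUnion S) ≤ #A + #(univ.biUnion S) := card_union_le _ _
      _ ≤ #A + ∑ i, #(S i) := by gcongr; exact card_biUnion_le
      _ = #A + ∑ i, (r i - #(N i ∩ A)) := by simp only [hScard]

lemma randomSubsetMean_avoidingCount [Fintype α] {p : ℝ} {S U N : Finset α} (hSU : Disjoint S U)
    (hSN : Disjoint S N) (hUN : Disjoint U N) (a : ℕ) :
    randomSubsetMean p
        (fun A ↦ if S ⊆ A ∧ Disjoint U A then (avoidingCount N a A : ℝ) else 0) =
      (#N).choose a * (p ^ #S * (1 - p) ^ (#U + a)) := by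
  have hcount : (fun A ↦ if S ⊆ A ∧ Disjoint U A then (avoidingCount N a A : ℝ) else 0) =
      ∑ T ∈ N.powersetCard a, fun A ↦ if S ⊆ A ∧ Disjoint (U ∪ T) A then 1 else 0 := by
    ext A
    simp only [avoidingCount, Finset.sum_apply, disjoint_union_left, ← and_assoc]
    split_ifs with h <;> simp [h]
  rw [hcount, map_sum, ← card_powersetCard, ← nsmul_eq_mul]
  refine sum_eq_card_nsmul fun T hT ↦ ?_
  obtain ⟨hTN, hTcard⟩ := mem_powersetCard.mp hT
  rw [randomSubsetMean_indicator_subset_disjoint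
      (disjoint_union_right.mpr ⟨hSU, disjoint_of_subset_right hTN hSN⟩),
    card_union_of_disjoint (disjoint_of_subset_right hTN hUN), hTcard]

end Shortfall

section Demand

variable {V : Type*} [DecidableEq V] {k l : ℕ}

variable (k l) in
/-- The number of neighbours that a vertex `v` must have in every final set `D ⊇ A`: a vertex
outside `A` may or may not be added to `D`, so it has to meet both domination conditions. The
`(k,l)`-conditions count closed neighbourhoods, hence `l - 1`. -/
def neighborDemand (A : Finset V) (v : V) : ℕ :=
  if v ∈ A then l - 1 else max k (l - 1)

lemma neighborDemand_sub_card_inter_le {N : Finset V} (hk : k ≤ #N) (hl : l ≤ #N + 1)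
    (A : Finset V) (v : V) :
    neighborDemand k l A v - #(N ∩ A) ≤
      (if {v} ⊆ A ∧ Disjoint ∅ A then avoidingCount N (#N + 1 - (l - 1)) A else 0) +
      (if ∅ ⊆ A ∧ Disjoint {v} A then avoidingCount N (#N + 1 - max k (l - 1)) A else 0) := by
  rw [neighborDemand]
  by_cases hv : v ∈ A
  · simpa [hv] using sub_card_inter_le_avoidingCount (by omega : l - 1 ≤ #N) A
  · simpa [hv] using sub_card_inter_le_avoidingCount (by omega : max k (l - 1) ≤ #N) A

lemma choose_mul_pow_add_choose_mul_pow_le {δ : ℕ} (hl : 1 ≤ l) (hkδ : k ≤ δ) (hlδ : l ≤ δ + 1)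
    {p : ℝ} (hp₀ : 0 ≤ p) (hp₁ : p ≤ 1) :
    δ.choose (δ + 1 - (l - 1)) * (p * (1 - p) ^ (δ + 1 - (l - 1))) +
        δ.choose (δ + 1 - max k (l - 1)) * (1 - p) ^ (1 + (δ + 1 - max k (l - 1))) ≤
      (δ.choose (δ + 1 - k) + δ.choose (δ + 2 - l)) * (1 - p) ^ (δ + 2 - max k l) := by
  have hq₀ : 0 ≤ 1 - p := sub_nonneg.mpr hp₁
  have hq₁ : 1 - p ≤ 1 := sub_le_self 1 hp₀
  rw [show δ + 1 - (l - 1) = δ + 2 - l by omega]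
  rcases le_or_gt l k with hlk | hkl
  · rw [max_eq_left hlk, max_eq_left (by omega : l - 1 ≤ k),
      show 1 + (δ + 1 - k) = δ + 2 - k by omega, add_mul, add_comm]
    have hpow : p * (1 - p) ^ (δ + 2 - l) ≤ (1 - p) ^ (δ + 2 - k) :=
      (mul_le_of_le_one_left (pow_nonneg hq₀ _) hp₁).trans
        (pow_le_pow_of_le_one hq₀ hq₁ (by omega))
    gcongr
  · rw [max_eq_right hkl.le, max_eq_right (by omega : k ≤ l - 1),
      show δ + 1 - (l - 1) = δ + 2 - l by omega]
    calc (δ.choose (δ + 2 - l) : ℝ) * (p * (1 - p) ^ (δ + 2 - l)) +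
          δ.choose (δ + 2 - l) * (1 - p) ^ (1 + (δ + 2 - l))
        = δ.choose (δ + 2 - l) * (1 - p) ^ (δ + 2 - l) := by ring
      _ ≤ (δ.choose (δ + 1 - k) + δ.choose (δ + 2 - l)) * (1 - p) ^ (δ + 2 - l) := by
        gcongr
        exact le_add_of_nonneg_left (Nat.cast_nonneg _)

lemma randomSubsetMean_neighborDemand_sub_le [Fintype V] {v : V} {N : Finset V} (hv : v ∉ N)
    (hl : 1 ≤ l) (hkN : k ≤ #N) (hlN : l ≤ #N + 1) {p : ℝ} (hp₀ : 0 ≤ p) (hp₁ : p ≤ 1) :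
    randomSubsetMean p (fun A ↦ ((neighborDemand k l A v - #(N ∩ A) : ℕ) : ℝ)) ≤
      ((#N).choose (#N + 1 - k) + (#N).choose (#N + 2 - l)) * (1 - p) ^ (#N + 2 - max k l) := by
  have hvN : Disjoint {v} N := disjoint_singleton_left.mpr hv
  calc randomSubsetMean p (fun A ↦ ((neighborDemand k l A v - #(N ∩ A) : ℕ) : ℝ))
      ≤ randomSubsetMean p
          ((fun A ↦ if {v} ⊆ A ∧ Disjoint ∅ A
              then (avoidingCount N (#N + 1 - (l - 1)) A : ℝ) else 0) +
            fun A ↦ if ∅ ⊆ A ∧ Disjoint {v} A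
              then (avoidingCount N (#N + 1 - max k (l - 1)) A : ℝ) else 0) :=
        randomSubsetMean_mono hp₀ hp₁ fun A ↦ by
          rw [Pi.add_apply]
          exact_mod_cast neighborDemand_sub_card_inter_le hkN hlN A v
    _ = (#N).choose (#N + 1 - (l - 1)) * (p * (1 - p) ^ (#N + 1 - (l - 1))) +
          (#N).choose (#N + 1 - max k (l - 1)) * (1 - p) ^ (1 + (#N + 1 - max k (l - 1))) := by
        rw [map_add,
          randomSubsetMean_avoidingCount (disjoint_empty_right _) hvN (disjoint_empty_left _),
          randomSubsetMean_avoidingCount (disjoint_empty_left _) (disjoint_empty_left _) hvN]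
        simp
    _ ≤ _ := choose_mul_pow_add_choose_mul_pow_le hl hkN hlN hp₀ hp₁

end Demand

section Domination

variable {V : Type*} [Fintype V] [DecidableEq V] (G : SimpleGraph V) [DecidableRel G.Adj]
  {k l δ : ℕ} {N : V → Finset V}

lemma paramDomNum_le_card {D : Finset V} (hout : ∀ v ∉ D, k ≤ #(G.neighborFinset v ∩ D))
    (hin : ∀ v ∈ D, l - 1 ≤ #(G.neighborFinset v ∩ D)) : paramDomNum G k l ≤ #D := by
  refine Nat.sInf_le ⟨D, fun v hv ↦ ?_, fun v hv ↦ ?_, rfl⟩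
  · rw [insert_inter_of_notMem hv]
    exact hout v hv
  · rw [insert_inter_of_mem hv, card_insert_of_notMem (by simp)]
    exact Nat.le_add_of_sub_le (hin v hv)

lemma paramDomNum_le_card_add_sum (hN : ∀ v, N v ⊆ G.neighborFinset v) {A : Finset V}
    (hA : ∀ v, neighborDemand k l A v ≤ #(N v)) :
    paramDomNum G k l ≤ #A + ∑ v, (neighborDemand k l A v - #(N v ∩ A)) := by
  obtain ⟨D, hAD, hdemand, hcard⟩ := exists_superset_le_card_inter hA A
  have hnbr (v : V) : neighborDemand k l A v ≤ #(G.neighborFinset v ∩ D) :=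
    (hdemand v).trans (card_le_card (inter_subset_inter_right (hN v)))
  refine (paramDomNum_le_card G (fun v hv ↦ ?_) fun v _ ↦ ?_).trans hcard
  · refine le_trans ?_ (hnbr v)
    rw [neighborDemand, if_neg fun h ↦ hv (hAD h)]
    exact le_max_left _ _
  · refine le_trans ?_ (hnbr v)
    rw [neighborDemand]
    split_ifs
    exacts [le_rfl, le_max_right _ _]

lemma paramDomNum_le_mul_card (hδ : ∀ v, δ ≤ G.degree v) (hl : 1 ≤ l) (hkδ : k ≤ δ)
    (hlδ : l ≤ δ + 1) {p : ℝ} (hp₀ : 0 ≤ p) (hp₁ : p ≤ 1) :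
    (paramDomNum G k l : ℝ) ≤
      (p + (δ.choose (δ + 1 - k) + δ.choose (δ + 2 - l)) * (1 - p) ^ (δ + 2 - max k l)) *
        Fintype.card V := by
  choose N hNsub hNcard using fun v ↦ exists_subset_card_eq (hδ v)
  have hvN (v : V) : v ∉ N v := fun h ↦ G.notMem_neighborFinset_self v (hNsub v h)
  have hdemand (A : Finset V) (v : V) : neighborDemand k l A v ≤ #(N v) := by
    rw [hNcard, neighborDemand]
    split_ifs <;> omega
  let shortfall : V → Finset V → ℝ := fun v A ↦ ((neighborDemand k l A v - #(N v ∩ A) : ℕ) : ℝ)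
  have hrepair (A : Finset V) :
      (paramDomNum G k l : ℝ) ≤ ((fun A ↦ (#A : ℝ)) + ∑ v, shortfall v : Finset V → ℝ) A := by
    simpa [shortfall] using
      (Nat.cast_le (α := ℝ)).mpr (paramDomNum_le_card_add_sum G hNsub (hdemand A))
  calc (paramDomNum G k l : ℝ)
      = randomSubsetMean p (fun _ : Finset V ↦ (paramDomNum G k l : ℝ)) :=
        (randomSubsetMean_const _).symm
    _ ≤ randomSubsetMean p ((fun A ↦ (#A : ℝ)) + ∑ v, shortfall v) :=
        randomSubsetMean_mono hp₀ hp₁ hrepair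
    _ = p * Fintype.card V + ∑ v, randomSubsetMean p (shortfall v) := by
        rw [map_add, map_sum, randomSubsetMean_card]
    _ ≤ p * Fintype.card V + ∑ _v : V,
          (δ.choose (δ + 1 - k) + δ.choose (δ + 2 - l)) * (1 - p) ^ (δ + 2 - max k l) := by
        gcongr with v
        simpa only [hNcard] using randomSubsetMean_neighborDemand_sub_le (hvN v) hl
          (by rwa [hNcard]) (by rwa [hNcard]) hp₀ hp₁
    _ = _ := by
        rw [sum_const, card_univ, nsmul_eq_mul]
        ring

end Domination

lemma exists_add_mul_one_sub_pow_succ_eq {d : ℕ} (hd : d ≠ 0) {b : ℝ} (hbd : 1 ≤ b * (1 + d)) :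
    ∃ p : ℝ, 0 ≤ p ∧ p ≤ 1 ∧ p + b * (1 - p) ^ (d + 1) =
      1 - d / ((1 + d) ^ (1 + 1 / d : ℝ) * b ^ (1 / d : ℝ)) := by
  have hb : 0 < b := pos_of_mul_pos_left (zero_lt_one.trans_le hbd) (by positivity)
  set x : ℝ := (b * (1 + d)) ^ (1 / d : ℝ) with hx
  have hx₁ : 1 ≤ x := one_le_rpow hbd (by positivity)
  have hxd : x ^ d = b * (1 + d) := by
    rw [hx, one_div]
    exact rpow_inv_natCast_pow (by positivity) hd
  have hdenom : (1 + d : ℝ) ^ (1 + 1 / d : ℝ) * b ^ (1 / d : ℝ) = (1 + d) * x := by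
    rw [hx, rpow_add (by positivity), rpow_one, mul_rpow hb.le (by positivity)]
    ring
  refine ⟨1 - x⁻¹, sub_nonneg.mpr (inv_le_one_of_one_le₀ hx₁),
    sub_le_self 1 (by positivity), ?_⟩
  rw [hdenom, sub_sub_cancel, inv_pow, pow_succ, hxd]
  field_simp
  ring

theorem param_domination_bound_two
    {V : Type*} [Fintype V] [DecidableEq V]
    (G : SimpleGraph V) [DecidableRel G.Adj]
    (n : ℕ) (hn : n = Fintype.card V)
    (δ : ℕ) (hδ : δ = G.minDegree)
    (k l : ℕ) (hk : 1 ≤ k) (hl : 1 ≤ l)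
    (dh : ℝ) (hdh : dh = (δ : ℝ) - max k l + 1) (hpos : 0 < dh)
    (b : ℝ) (hb : b = (δ.choose (k - 1) : ℕ) + if 2 ≤ l then (δ.choose (l - 2) : ℕ) else 0) :
    (paramDomNum G k l : ℝ) ≤
      (1 - dh / ((1 + dh) ^ (1 + 1 / dh) * b ^ (1 / dh))) * n := by
  have hmax : max k l ≤ δ := by
    have : ((max k l : ℕ) : ℝ) < δ + 1 := by linarith
    exact Nat.lt_succ_iff.mp (mod_cast this)
  obtain ⟨d, hd⟩ := Nat.exists_eq_add_of_le hmax
  have hdh' : dh = (d + 1 : ℕ) := by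
    rw [hdh, hd]
    push_cast
    ring
  have hb' : b = δ.choose (δ + 1 - k) + δ.choose (δ + 2 - l) := by
    rw [hb, choose_succ_sub_eq_choose_pred hk (by omega), choose_add_two_sub_eq_ite hl (by omega)]
  have hb₁ : 1 ≤ b := by
    have : 1 ≤ δ.choose (δ + 1 - k) := Nat.choose_pos (by omega)
    rw [hb']
    exact_mod_cast le_add_right this
  obtain ⟨p, hp₀, hp₁, hp⟩ := exists_add_mul_one_sub_pow_succ_eq d.succ_ne_zero
    (one_le_mul_of_one_le_of_one_le hb₁ (le_add_of_nonneg_right (Nat.cast_nonneg _)))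
  have hdeg (v : V) : δ ≤ G.degree v := hδ ▸ G.minDegree_le_degree v
  have hbound : (paramDomNum G k l : ℝ) ≤ (p + b * (1 - p) ^ (d + 1 + 1)) * n := by
    rw [hb', hn, show d + 1 + 1 = δ + 2 - max k l by omega]
    exact paramDomNum_le_mul_card G hdeg hl (by omega) (by omega) hp₀ hp₁
  rwa [hp, ← hdh'] at hbound
end

section
/- For any finite simple graph G of order n with minimum degree δ > 0 and any integer k ≥ 1, with r = ⌊k/(δ+1)⌋ + 1, θ = (δ+1)r − k, ρ = 1/θ and B_{k−1} = C((δ+1)r, k−1), the {k}-domination number satisfies γ_{{k}}(G) ≤ (1 − (rρ)^ρ / ((1+ρ)^{1+ρ} · B_{k−1}^ρ)) · r·n. -/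
open Finset Real

/-- The {k}-domination number: the smallest weight of a function f : V → {0,1,...,k}
whose sum over every closed neighbourhood is at least k. -/
noncomputable def braceKDomNum {V : Type*} [Fintype V] [DecidableEq V]
    (G : SimpleGraph V) [DecidableRel G.Adj] (k : ℕ) : ℕ :=
  sInf {w : ℕ | ∃ f : V → ℕ, (∀ v, f v ≤ k) ∧
    (∀ v, k ≤ ∑ u ∈ insert v (G.neighborFinset v), f u) ∧ w = ∑ v, f v}

/-!
Put `r` tokens on every vertex and delete each token independently with probability `q`. Fix
`δ + 1` vertices of every closed neighbourhood; they carry `(δ + 1) r = k + θ` tokens, so a vertex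
whose chosen set loses `y` tokens is short by at most `y - θ ≤ C(y, θ + 1)`. Giving every vertex its
own shortfall makes the number of tokens per vertex a `{k}`-dominating function up to truncation at
`k`. As `C(y, θ + 1)` counts the lost `(θ + 1)`-sets, the expected weight is at most
`n (r (1 - q) + B q ^ (θ + 1))`, where `B = C((δ + 1) r, θ + 1) = C((δ + 1) r, k - 1)`. The bound is
the minimum of this expression over `q`.
-/

theorem tsub_le_choose_succ (n t : ℕ) : n - t ≤ n.choose (t + 1) := by
  induction n with
  | zero => simp
  | succ n ih =>
    rcases Nat.lt_or_ge n t with hlt | hle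
    · omega
    · have hpos : 0 < n.choose t := Nat.choose_pos hle
      rw [Nat.choose_succ_succ']
      omega

theorem le_succ_mul_choose_succ {n t : ℕ} (h : t < n) : n ≤ (t + 1) * n.choose (t + 1) := by
  obtain ⟨m, rfl⟩ := Nat.exists_eq_add_of_le' (Nat.one_le_of_lt h)
  calc m + 1 ≤ (m + 1) * m.choose t :=
        Nat.le_mul_of_pos_right _ (Nat.choose_pos (Nat.le_of_lt_succ h))
    _ = (t + 1) * (m + 1).choose (t + 1) := by rw [Nat.add_one_mul_choose_eq, mul_comm]

section BernoulliExpect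

variable {α R : Type*} [Fintype α] [DecidableEq α] [CommRing R]

/-- The expectation of a function of the random subset of `α` that contains each element
independently with probability `q`. As a polynomial expression in `q` it makes sense in every
commutative ring, and being a finite sum it is bundled as a linear map. -/
def bernoulliExpect (q : R) : (Finset α → R) →ₗ[R] R :=
  Fintype.linearCombination R fun U ↦ q ^ #U * (1 - q) ^ #Uᶜ

theorem bernoulliExpect_apply (q : R) (F : Finset α → R) :
    bernoulliExpect q F = ∑ U, F U * (q ^ #U * (1 - q) ^ #Uᶜ) := by
  simp only [bernoulliExpect, Fintype.linearCombination_apply, smul_eq_mul]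

theorem bernoulliExpect_subset (q : R) (A : Finset α) :
    bernoulliExpect q (fun U ↦ if A ⊆ U then 1 else 0) = q ^ #A := by
  have hterm (U : Finset α) : (if A ⊆ U then 1 else 0) * (q ^ #U * (1 - q) ^ #Uᶜ) =
      (∏ _i ∈ U, q) * ∏ i ∈ Uᶜ, if i ∈ A then 0 else 1 - q := by
    split_ifs with hAU
    · have hout : ∏ i ∈ Uᶜ, (if i ∈ A then 0 else 1 - q) = ∏ _i ∈ Uᶜ, (1 - q) :=
        prod_congr rfl fun i hi ↦ if_neg fun hiA ↦ mem_compl.1 hi (hAU hiA)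
      rw [hout, prod_const, prod_const, one_mul]
    · obtain ⟨i, hiA, hiU⟩ := not_subset.1 hAU
      have hzero : ∏ i ∈ Uᶜ, (if i ∈ A then 0 else 1 - q) = 0 :=
        prod_eq_zero (mem_compl.2 hiU) (if_pos hiA)
      rw [hzero, zero_mul, mul_zero]
  calc bernoulliExpect q (fun U ↦ if A ⊆ U then 1 else 0)
      = ∏ i : α, (q + if i ∈ A then 0 else 1 - q) := by
        rw [bernoulliExpect_apply, Fintype.prod_add, sum_congr rfl fun U _ ↦ hterm U]
    _ = ∏ i : α, if i ∈ A then q else 1 :=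
        prod_congr rfl fun i _ ↦ by split_ifs <;> ring
    _ = q ^ #A := by rw [prod_ite_mem, univ_inter, prod_const]

theorem bernoulliExpect_choose_card_inter (q : R) (C : Finset α) (s : ℕ) :
    bernoulliExpect q (fun U ↦ ((#(C ∩ U)).choose s : R)) = (#C).choose s * q ^ s := by
  have hcount : (fun U ↦ ((#(C ∩ U)).choose s : R)) =
      ∑ A ∈ powersetCard s C, fun U ↦ if A ⊆ U then 1 else 0 := by
    ext U
    have hfilter : powersetCard s (C ∩ U) = {A ∈ powersetCard s C | A ⊆ U} := by
      ext A
      simp only [mem_filter, mem_powersetCard, subset_inter_iff, and_right_comm]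
    rw [Finset.sum_apply, sum_boole, ← card_powersetCard, hfilter]
  calc bernoulliExpect q (fun U ↦ ((#(C ∩ U)).choose s : R))
      = ∑ A ∈ powersetCard s C, q ^ #A := by
        simp only [hcount, map_sum, bernoulliExpect_subset]
    _ = ∑ _A ∈ powersetCard s C, q ^ s :=
        sum_congr rfl fun A hA ↦ by rw [(mem_powersetCard.1 hA).2]
    _ = (#C).choose s * q ^ s := by rw [sum_const, card_powersetCard, nsmul_eq_mul]

theorem bernoulliExpect_card (q : R) :
    bernoulliExpect q (fun U : Finset α ↦ (#U : R)) = Fintype.card α * q := by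
  simpa using bernoulliExpect_choose_card_inter q (univ : Finset α) 1

theorem bernoulliExpect_const (q c : R) :
    bernoulliExpect q (fun _ : Finset α ↦ c) = c := by
  have hone : bernoulliExpect q (fun _ : Finset α ↦ (1 : R)) = 1 := by
    simpa using bernoulliExpect_subset q (∅ : Finset α)
  calc bernoulliExpect q (fun _ : Finset α ↦ c)
      = bernoulliExpect q (c • fun _ : Finset α ↦ (1 : R)) := by
        congr 1; ext; simp
    _ = c := by rw [map_smul, hone, smul_eq_mul, mul_one]

theorem bernoulliExpect_mono [PartialOrder R] [IsOrderedRing R] {q : R} (hq0 : 0 ≤ q)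
    (hq1 : q ≤ 1) {F F' : Finset α → R} (h : ∀ U, F U ≤ F' U) :
    bernoulliExpect q F ≤ bernoulliExpect q F' := by
  simp only [bernoulliExpect_apply]
  have hweight (U : Finset α) : 0 ≤ q ^ #U * (1 - q) ^ #Uᶜ :=
    mul_nonneg (pow_nonneg hq0 _) (pow_nonneg (sub_nonneg.2 hq1) _)
  exact sum_le_sum fun U _ ↦ mul_le_mul_of_nonneg_right (h U) (hweight U)

end BernoulliExpect

section TokenRemoval

variable {V : Type*} [Fintype V] [DecidableEq V] (G : SimpleGraph V) [DecidableRel G.Adj]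

theorem braceKDomNum_le_sum {k : ℕ} {f : V → ℕ}
    (hf : ∀ v, k ≤ ∑ u ∈ insert v (G.neighborFinset v), f u) :
    braceKDomNum G k ≤ ∑ v, f v := by
  have hsub (s : Finset V) : min (∑ u ∈ s, f u) k ≤ ∑ u ∈ s, min (f u) k :=
    le_sum_of_subadditive (fun x ↦ min x k) (Nat.zero_min k).le (fun x y ↦ by omega) s f
  calc braceKDomNum G k
      ≤ ∑ v, min (f v) k :=
        Nat.sInf_le ⟨fun v ↦ min (f v) k, fun v ↦ min_le_right _ _,
          fun v ↦ (le_min (hf v) le_rfl).trans (hsub _), rfl⟩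
    _ ≤ ∑ v, f v := sum_le_sum fun v _ ↦ min_le_left _ _

theorem braceKDomNum_le_sum_add_deficit (k : ℕ) (f : V → ℕ) :
    braceKDomNum G k ≤ ∑ v, (f v + (k - ∑ u ∈ insert v (G.neighborFinset v), f u)) := by
  set deficit : V → ℕ := fun v ↦ k - ∑ u ∈ insert v (G.neighborFinset v), f u
  refine braceKDomNum_le_sum G fun v ↦ ?_
  have hself : deficit v ≤ ∑ u ∈ insert v (G.neighborFinset v), deficit u :=
    single_le_sum_of_canonicallyOrdered (mem_insert_self v _)
  calc k ≤ ∑ u ∈ insert v (G.neighborFinset v), f u + deficit v := le_add_tsub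
    _ ≤ ∑ u ∈ insert v (G.neighborFinset v), (f u + deficit u) := by
      rw [sum_add_distrib]
      gcongr

/-- `U` is the set of deleted tokens, `V × Fin r` being the set of all tokens. -/
theorem braceKDomNum_le_card_compl_add_sum_choose {k r t : ℕ} {N : V → Finset V}
    (hN : ∀ v, N v ⊆ insert v (G.neighborFinset v)) (hcard : ∀ v, #(N v) * r = k + t)
    (U : Finset (V × Fin r)) :
    braceKDomNum G k ≤ #Uᶜ + ∑ v, (#(N v ×ˢ univ ∩ U)).choose (t + 1) := by
  set f : V → ℕ := fun v ↦ #{x ∈ Uᶜ | x.1 = v} with hf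
  have hsum (s : Finset V) : ∑ v ∈ s, f v = #(s ×ˢ univ \ U) := by
    rw [hf, sum_card_fiberwise_eq_card_filter]
    congr 1
    ext x
    simp [and_comm]
  have hdeficit (v : V) : k - ∑ u ∈ insert v (G.neighborFinset v), f u ≤
      (#(N v ×ˢ univ ∩ U)).choose (t + 1) := by
    have hsplit := card_inter_add_card_sdiff (N v ×ˢ (univ : Finset (Fin r))) U
    rw [card_product, card_univ, Fintype.card_fin, hcard, ← hsum] at hsplit
    calc k - ∑ u ∈ insert v (G.neighborFinset v), f u
        ≤ k - ∑ u ∈ N v, f u := by gcongr; exact hN v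
      _ = #(N v ×ˢ univ ∩ U) - t := by omega
      _ ≤ (#(N v ×ˢ univ ∩ U)).choose (t + 1) := tsub_le_choose_succ _ _
  have hkept : ∑ v, f v = #Uᶜ := by rw [hsum, univ_product_univ, compl_eq_univ_sdiff]
  calc braceKDomNum G k
      ≤ ∑ v, (f v + (k - ∑ u ∈ insert v (G.neighborFinset v), f u)) :=
        braceKDomNum_le_sum_add_deficit G k f
    _ ≤ #Uᶜ + ∑ v, (#(N v ×ˢ univ ∩ U)).choose (t + 1) := by
        rw [sum_add_distrib, hkept]
        gcongr with v
        exact hdeficit v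

theorem exists_subset_insert_neighborFinset_card_eq {d : ℕ} (hd : d ≤ G.minDegree + 1) (v : V) :
    ∃ S ⊆ insert v (G.neighborFinset v), #S = d := by
  apply exists_subset_card_eq
  rw [card_insert_of_notMem (G.notMem_neighborFinset_self v), G.card_neighborFinset_eq_degree]
  exact hd.trans (Nat.succ_le_succ (G.minDegree_le_degree v))

theorem braceKDomNum_le_card_mul {k r t d : ℕ} (hd : d ≤ G.minDegree + 1) (hdr : d * r = k + t)
    {q : ℝ} (hq0 : 0 ≤ q) (hq1 : q ≤ 1) :
    (braceKDomNum G k : ℝ) ≤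
      Fintype.card V * (r * (1 - q) + (d * r).choose (t + 1) * q ^ (t + 1)) := by
  choose N hN hcard using exists_subset_insert_neighborFinset_card_eq G hd
  let tokens (v : V) : Finset (V × Fin r) := N v ×ˢ univ
  have htokens (v : V) : #(tokens v) = d * r := by simp [tokens, hcard]
  let total : Finset (V × Fin r) → ℝ := fun _ ↦ Fintype.card V * r
  let deleted : Finset (V × Fin r) → ℝ := fun U ↦ #U
  let lostSets (v : V) : Finset (V × Fin r) → ℝ := fun U ↦ (#(tokens v ∩ U)).choose (t + 1)
  have hpointwise (U : Finset (V × Fin r)) : (braceKDomNum G k : ℝ) ≤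
      (total - deleted + ∑ v, lostSets v) U := by
    have hnat := braceKDomNum_le_card_compl_add_sum_choose G hN
      (fun v ↦ (hcard v).symm ▸ hdr) U
    have hcompl : (#Uᶜ : ℝ) = Fintype.card V * r - #U := by
      rw [card_compl, Nat.cast_sub (card_le_univ U), Fintype.card_prod, Fintype.card_fin,
        Nat.cast_mul]
    simp only [Pi.add_apply, Pi.sub_apply, Finset.sum_apply, total, deleted, lostSets, tokens]
    rw [← hcompl]
    exact_mod_cast hnat
  calc (braceKDomNum G k : ℝ)
      = bernoulliExpect q (fun _ : Finset (V × Fin r) ↦ (braceKDomNum G k : ℝ)) :=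
        (bernoulliExpect_const q _).symm
    _ ≤ bernoulliExpect q (total - deleted + ∑ v, lostSets v) :=
        bernoulliExpect_mono hq0 hq1 hpointwise
    _ = Fintype.card V * r - Fintype.card V * r * q +
          ∑ _v : V, (d * r).choose (t + 1) * q ^ (t + 1) := by
        simp only [map_add, map_sub, map_sum, bernoulliExpect_const, total, deleted, lostSets,
          bernoulliExpect_card, bernoulliExpect_choose_card_inter, htokens, Fintype.card_prod,
          Fintype.card_fin, Nat.cast_mul]
    _ = Fintype.card V * (r * (1 - q) + (d * r).choose (t + 1) * q ^ (t + 1)) := by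
        rw [sum_const, card_univ, nsmul_eq_mul]
        ring

end TokenRemoval

section OptimalProb

/-- The minimiser of `r * (1 - q) + B * q ^ (θ + 1)` over `q ≥ 0`, where `ρ = 1 / θ`: the solution
of `(θ + 1) * B * q ^ θ = r`, written in terms of `ρ`. -/
noncomputable def optimalProb (r B ρ : ℝ) : ℝ :=
  (r * ρ / ((1 + ρ) * B)) ^ ρ

variable {r B ρ : ℝ}

theorem optimalProb_nonneg (hr : 0 ≤ r) (hB : 0 ≤ B) (hρ : 0 ≤ ρ) : 0 ≤ optimalProb r B ρ := by
  unfold optimalProb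
  positivity

theorem optimalProb_le_one (hr : 0 ≤ r) (hB : 0 ≤ B) (hρ : 0 ≤ ρ) (h : r * ρ ≤ (1 + ρ) * B) :
    optimalProb r B ρ ≤ 1 :=
  rpow_le_one (by positivity) (div_le_one_of_le₀ h (by positivity)) hρ

theorem optimalProb_pow (hr : 0 ≤ r) (hB : 0 ≤ B) (hρ : 0 ≤ ρ) {t : ℕ} (hρt : ρ * t = 1) :
    optimalProb r B ρ ^ t = r * ρ / ((1 + ρ) * B) := by
  rw [optimalProb, ← rpow_mul_natCast (by positivity), hρt, rpow_one]

theorem optimalProb_div_one_add (hr : 0 ≤ r) (hB : 0 ≤ B) (hρ : 0 ≤ ρ) :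
    optimalProb r B ρ / (1 + ρ) = (r * ρ) ^ ρ / ((1 + ρ) ^ (1 + ρ) * B ^ ρ) := by
  rw [optimalProb, div_rpow (by positivity) (by positivity), mul_rpow (by positivity) hB,
    rpow_one_add' (by positivity) (by positivity), div_div]
  ring_nf

theorem mul_one_sub_optimalProb_add_mul_pow (hr : 0 ≤ r) (hB : 0 < B) (hρ : 0 ≤ ρ) {t : ℕ}
    (hρt : ρ * t = 1) :
    r * (1 - optimalProb r B ρ) + B * optimalProb r B ρ ^ (t + 1) =
      (1 - (r * ρ) ^ ρ / ((1 + ρ) ^ (1 + ρ) * B ^ ρ)) * r := by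
  rw [← optimalProb_div_one_add hr hB.le hρ, pow_succ, optimalProb_pow hr hB.le hρ hρt]
  field_simp
  ring

end OptimalProb

theorem braceK_domination_bound_general
    {V : Type*} [Fintype V] [DecidableEq V]
    (G : SimpleGraph V) [DecidableRel G.Adj]
    (n : ℕ) (hn : n = Fintype.card V)
    (δ : ℕ) (hδ : δ ≤ G.minDegree)
    (k : ℕ) (hk : 1 ≤ k)
    (r : ℕ) (hr : k < (δ + 1) * r)
    (θ : ℝ) (hθ : θ = ((δ : ℝ) + 1) * r - k)
    (ρ : ℝ) (hρ : ρ = 1 / θ)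
    (B : ℝ) (hB : B = (((δ + 1) * r).choose (k - 1) : ℕ)) :
    (braceKDomNum G k : ℝ) ≤
      (1 - ((r : ℝ) * ρ) ^ ρ / ((1 + ρ) ^ (1 + ρ) * B ^ ρ)) * ((r : ℝ) * n) := by
  obtain ⟨t, ht⟩ := Nat.exists_eq_add_of_le hr.le
  have htr : t < (δ + 1) * r := by omega
  have hθt : θ = t := by
    rw [hθ, sub_eq_iff_eq_add']
    exact_mod_cast ht
  have ht0 : (0 : ℝ) < t := by exact_mod_cast (by omega : 0 < t)
  have hρ0 : 0 < ρ := by rw [hρ, hθt]; positivity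
  have hρt : ρ * t = 1 := by rw [hρ, hθt, one_div_mul_cancel ht0.ne']
  have hBt : B = ((δ + 1) * r).choose (t + 1) := by
    have hsplit : (δ + 1) * r = (k - 1) + (t + 1) := by omega
    rw [hB, Nat.choose_symm_of_eq_add hsplit]
  have hB0 : 0 < B := by
    rw [hBt]
    exact_mod_cast Nat.choose_pos htr
  have hrB : r * ρ ≤ (1 + ρ) * B := by
    have hle : (r : ℝ) ≤ (t + 1) * B := by
      rw [hBt]
      exact_mod_cast (Nat.le_mul_of_pos_left r δ.succ_pos).trans (le_succ_mul_choose_succ htr)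
    calc r * ρ ≤ (t + 1) * B * ρ := by gcongr
      _ = (1 + ρ) * B := by linear_combination B * hρt
  have hbound := braceKDomNum_le_card_mul G (Nat.succ_le_succ hδ) ht
    (optimalProb_nonneg r.cast_nonneg hB0.le hρ0.le)
    (optimalProb_le_one r.cast_nonneg hB0.le hρ0.le hrB)
  rwa [← hBt, ← hn, mul_one_sub_optimalProb_add_mul_pow r.cast_nonneg hB0 hρ0.le hρt, mul_comm,
    mul_assoc] at hbound

theorem braceK_domination_bound
    {V : Type*} [Fintype V] [DecidableEq V]
    (G : SimpleGraph V) [DecidableRel G.Adj]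
    (n : ℕ) (hn : n = Fintype.card V)
    (δ : ℕ) (hδ : δ = G.minDegree)
    (hδ0 : 0 < δ)
    (k : ℕ) (hk : 1 ≤ k)
    (r : ℕ) (hr : r = k / (δ + 1) + 1)
    (θ : ℝ) (hθ : θ = ((δ : ℝ) + 1) * r - k)
    (ρ : ℝ) (hρ : ρ = 1 / θ)
    (B : ℝ) (hB : B = (((δ + 1) * r).choose (k - 1) : ℕ)) :
    (braceKDomNum G k : ℝ) ≤
      (1 - ((r : ℝ) * ρ) ^ ρ / ((1 + ρ) ^ (1 + ρ) * B ^ ρ)) * ((r : ℝ) * n) :=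
  braceK_domination_bound_general G n hn δ hδ.le k hk r
    (hr ▸ Nat.lt_mul_div_succ k δ.succ_pos) θ hθ ρ hρ B hB
end
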